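/- arXiv:2004.13231 — 4 statements merged into one kernel-verified Lean document; each statement's English description precedes it below -/
import Mathlib

section
/- For every total Boolean function f : {0,1}^n → {0,1}, the real degree of f is at most the square of its spectral sensitivity: deg(f) ≤ λ(f)². -/
/-!
Huang's argument, run directly on the full cube.

By Möbius inversion on `{0,1}^n`, `f` is represented by the multilinear polynomial whose coefficient
at `∏_{i ∈ s} X_i` is `± ∑_{x ≤ s} (-1)^|x| f(x)` (`mobius_inversion`). Hence some nonzero
coefficient has `|s| ≥ deg f` (`exists_mobCoeff_ne_zero`), and it remains to show `|s| ≤ λ(f)²` for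
every such `s ≠ ∅` (`card_le_of_mobCoeff_ne_zero`).

On the subcube `C = {x ≤ s}` let `h(x) = (-1)^(|x| + f(x))`. The coefficient being nonzero means
`∑_C h ≠ 0`, so some sign class `V` of `h` has more than half of the points of `C`. Two neighbours
in the same sign class have different values of `f`, so every edge inside `V` lies in the
sensitivity graph.

Let `B` be the signed adjacency matrix of the cube in the directions of `s`, with Jordan-Wigner
signs; its directional parts anticommute, so `B² = |s|` (`huangOp_huangOp`). If `u` is supported on
the even points of `C`, then `v = (B + √|s|) u` satisfies `B v = √|s| v`, and `v ≠ 0` if `u ≠ 0`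
because `B u` lives on odd points. There are `|C|/2` even points and fewer than `|C|/2` points in
`C \ V`, so some `u ≠ 0` makes `v` vanish outside `V`. Then
`√|s| ‖v‖² = ⟨v, B v⟩ ≤ ⟨|v|, A_f |v|⟩ ≤ λ(f) ‖v‖²`.
-/

/-- Flip bit `i` of the Boolean string `x`. -/
def flipBit {n : ℕ} (x : Fin n → Bool) (i : Fin n) : Fin n → Bool :=
  Function.update x i (!x i)

/-- Sensitivity of `f` at input `x`. -/
def sensAt {n : ℕ} (f : (Fin n → Bool) → Bool) (x : Fin n → Bool) : ℕ :=
  (Finset.univ.filter fun i : Fin n => f (flipBit x i) ≠ f x).card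

/-- (Maximum) sensitivity of `f`. -/
def sens {n : ℕ} (f : (Fin n → Bool) → Bool) : ℕ :=
  Finset.univ.sup (sensAt f)

/-- `b`-sensitivity of `f`: max sensitivity over inputs with value `b` (0 if none). -/
def sensB {n : ℕ} (f : (Fin n → Bool) → Bool) (b : Bool) : ℕ :=
  (Finset.univ.filter fun x => f x = b).sup (sensAt f)

/-- Adjacency matrix of the sensitivity graph of `f`. -/
def adjMat {n : ℕ} (f : (Fin n → Bool) → Bool) :
    Matrix (Fin n → Bool) (Fin n → Bool) ℝ :=
  fun x y => if (∃ i, y = flipBit x i) ∧ f x ≠ f y then 1 else 0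

/-- Spectral norm (ℓ₂ operator norm) of a real matrix. -/
noncomputable def specNorm {m k : Type*} [Fintype m] [Fintype k] [DecidableEq k]
    (M : Matrix m k ℝ) : ℝ :=
  ‖LinearMap.toContinuousLinearMap (Matrix.toEuclideanLin M)‖

/-- Spectral sensitivity of `f`. -/
noncomputable def specSens {n : ℕ} (f : (Fin n → Bool) → Bool) : ℝ :=
  specNorm (adjMat f)

/-- Degree of `f`: minimal total degree of a real polynomial representing `f` on `{0,1}^n`. -/
noncomputable def bdeg {n : ℕ} (f : (Fin n → Bool) → Bool) : ℕ :=
  sInf {d | ∃ p : MvPolynomial (Fin n) ℝ, p.totalDegree = d ∧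
    ∀ x : Fin n → Bool,
      MvPolynomial.eval (fun i => if x i then (1 : ℝ) else 0) p
        = if f x then 1 else 0}

open Finset

/-! ### Möbius inversion and the degree -/

/-- The sign `(-1)^b` of a bit. -/
def bitSign (b : Bool) : ℝ := if b then -1 else 1

/-- The parity sign `(-1)^|x|` of a Boolean string. -/
def parSign {n : ℕ} (x : Fin n → Bool) : ℝ := ∏ k, bitSign (x k)

/-- The number of ones in a Boolean string. -/
def hamWeight {n : ℕ} (s : Fin n → Bool) : ℕ := (univ.filter fun i => s i = true).card

/-- The Möbius function of the two-element chain `{false < true}`. -/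
def bitMob (b c : Bool) : ℝ := if b ≤ c then bitSign b * bitSign c else 0

/-- The coefficient of `∏_{s i = 1} X_i` in the multilinear polynomial representing `f`. -/
def mobCoeff {n : ℕ} (f : (Fin n → Bool) → Bool) (s : Fin n → Bool) : ℝ :=
  ∑ x, (if f x then 1 else 0) * ∏ i, bitMob (x i) (s i)

/-- The Möbius coefficients of `f` recover `f`. The inner sum over `s` factors over the coordinates,
and each factor is the defining identity of the Möbius function on a two-element chain. -/
lemma mobius_inversion {n : ℕ} (f : (Fin n → Bool) → Bool) (y : Fin n → Bool) :
    ∑ s, mobCoeff f s * ∏ i, (if s i ≤ y i then (1 : ℝ) else 0) = if f y then 1 else 0 := by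
  have key : ∀ x : Fin n → Bool,
      ∑ s : Fin n → Bool, (∏ i, bitMob (x i) (s i)) * ∏ i, (if s i ≤ y i then (1 : ℝ) else 0)
        = if x = y then 1 else 0 := by
    intro x
    simp_rw [← prod_mul_distrib]
    rw [← Fintype.prod_sum fun i (b : Bool) => bitMob (x i) b * (if b ≤ y i then (1 : ℝ) else 0)]
    have : ∀ i, ∑ b : Bool, bitMob (x i) b * (if b ≤ y i then (1 : ℝ) else 0)
        = if x i = y i then 1 else 0 := by
      intro i
      cases x i <;> cases y i <;>
        simp [bitMob, bitSign, show ¬ (true ≤ false) by decide]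
    simp_rw [this]
    rw [prod_ite_zero]
    simp [funext_iff]
  simp_rw [mobCoeff, sum_mul]
  rw [sum_comm]
  simp_rw [mul_assoc, ← mul_sum, key]
  simp

lemma exists_mobCoeff_ne_zero {n : ℕ} (f : (Fin n → Bool) → Bool) (hd : 0 < bdeg f) :
    ∃ s, mobCoeff f s ≠ 0 ∧ bdeg f ≤ hamWeight s := by
  classical
  set p : MvPolynomial (Fin n) ℝ :=
    ∑ s, MvPolynomial.C (mobCoeff f s) *
      ∏ i ∈ univ.filter (fun i => s i = true), MvPolynomial.X i with hp
  have hle : bdeg f ≤ p.totalDegree := by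
    refine Nat.sInf_le ⟨p, rfl, fun x => ?_⟩
    rw [← mobius_inversion f x, hp, map_sum]
    refine sum_congr rfl fun s _ => ?_
    rw [map_mul, MvPolynomial.eval_C, map_prod, prod_filter]
    congr 1
    refine prod_congr rfl fun i _ => ?_
    rw [MvPolynomial.eval_X]
    cases s i <;> cases x i <;> simp
  by_contra! hcon
  have hlt : p.totalDegree < bdeg f := by
    refine (MvPolynomial.totalDegree_finsetSum _ _).trans_lt ((Finset.sup_lt_iff hd).2 fun s _ => ?_)
    by_cases h0 : mobCoeff f s = 0
    · simpa [h0] using hd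
    refine lt_of_le_of_lt ?_ (hcon s h0)
    refine (MvPolynomial.totalDegree_mul _ _).trans ?_
    rw [MvPolynomial.totalDegree_C, zero_add]
    refine (MvPolynomial.totalDegree_finsetProd _ _).trans ?_
    simp [hamWeight]
  omega

/-! ### Signs and bit flips -/

lemma flipBit_flipBit {n : ℕ} (x : Fin n → Bool) (i : Fin n) : flipBit (flipBit x i) i = x := by
  simp [flipBit]

lemma flipBit_comm {n : ℕ} (x : Fin n → Bool) (i j : Fin n) :
    flipBit (flipBit x i) j = flipBit (flipBit x j) i := by
  ext k
  rcases eq_or_ne i j with rfl | h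
  · rfl
  · rw [flipBit, flipBit, flipBit, flipBit, Function.update_of_ne h.symm, Function.update_of_ne h,
      Function.update_comm h]

lemma flipBit_injective {n : ℕ} (x : Fin n → Bool) : Function.Injective (flipBit x) := by
  intro i j h
  by_contra hij
  have := congrFun h i
  simp [flipBit, hij] at this

lemma bitSign_eq (b : Bool) : bitSign b = 1 ∨ bitSign b = -1 := by
  cases b <;> simp [bitSign]

lemma parSign_eq {n : ℕ} (x : Fin n → Bool) : parSign x = 1 ∨ parSign x = -1 := by
  refine prod_induction _ (fun r : ℝ => r = 1 ∨ r = -1) ?_ (Or.inl rfl) fun k _ => bitSign_eq _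
  rintro a b (rfl | rfl) (rfl | rfl) <;> simp

lemma parSign_flipBit {n : ℕ} (x : Fin n → Bool) (i : Fin n) :
    parSign (flipBit x i) = -parSign x := by
  have : ∀ k, bitSign (flipBit x i k) = bitSign (x k) * if i = k then -1 else 1 := by
    intro k
    rcases eq_or_ne i k with rfl | h
    · cases hx : x i <;> simp [flipBit, bitSign, hx]
    · simp [flipBit, h, h.symm]
  simp_rw [parSign, this]
  rw [prod_mul_distrib, prod_ite_eq, if_pos (mem_univ i), mul_neg_one]

/-- The Jordan-Wigner sign of direction `i` at `x`: the parity of the bits of `x` before `i`. -/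
def jwSign {n : ℕ} (i : Fin n) (x : Fin n → Bool) : ℝ :=
  ∏ k, if k < i then bitSign (x k) else 1

lemma jwSign_eq {n : ℕ} (i : Fin n) (x : Fin n → Bool) : jwSign i x = 1 ∨ jwSign i x = -1 := by
  refine prod_induction _ (fun r : ℝ => r = 1 ∨ r = -1) ?_ (Or.inl rfl) fun k _ => ?_
  · rintro a b (rfl | rfl) (rfl | rfl) <;> simp
  · split_ifs
    exacts [bitSign_eq _, Or.inl rfl]

lemma jwSign_flipBit {n : ℕ} (i j : Fin n) (x : Fin n → Bool) :
    jwSign j (flipBit x i) = jwSign j x * if i < j then -1 else 1 := by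
  have : ∀ k, (if k < j then bitSign (flipBit x i k) else 1)
      = (if k < j then bitSign (x k) else 1) * if i = k then (if i < j then -1 else 1) else 1 := by
    intro k
    rcases eq_or_ne i k with rfl | h
    · cases hx : x i <;> by_cases hij : i < j <;> simp [flipBit, bitSign, hx, hij]
    · simp [flipBit, h, h.symm]
  simp_rw [jwSign, this]
  rw [prod_mul_distrib, prod_ite_eq, if_pos (mem_univ i)]

/-! ### The signed adjacency operator -/

/-- Huang's signed adjacency operator of the cube, restricted to the directions `i` with
`s i = 1`. -/
def huangOp {n : ℕ} (s : Fin n → Bool) :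
    ((Fin n → Bool) → ℝ) →ₗ[ℝ] ((Fin n → Bool) → ℝ) where
  toFun v x := ∑ i ∈ univ.filter (fun i => s i = true), jwSign i x * v (flipBit x i)
  map_add' v w := by
    ext x
    simp [mul_add, sum_add_distrib]
  map_smul' c v := by
    ext x
    simp only [Pi.smul_apply, smul_eq_mul, RingHom.id_apply, mul_sum]
    exact sum_congr rfl fun i _ => by ring

lemma huangOp_apply {n : ℕ} (s : Fin n → Bool) (v : (Fin n → Bool) → ℝ) (x : Fin n → Bool) :
    huangOp s v x = ∑ i ∈ univ.filter (fun i => s i = true), jwSign i x * v (flipBit x i) := rfl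

/-- `B² = |s|`: distinct directions anticommute, and each direction squares to the identity. -/
lemma huangOp_huangOp {n : ℕ} (s : Fin n → Bool) (v : (Fin n → Bool) → ℝ) :
    huangOp s (huangOp s v) = (hamWeight s : ℝ) • v := by
  ext x
  set S := univ.filter (fun i => s i = true) with hS
  set t : Fin n → Fin n → ℝ := fun i j =>
    jwSign i x * (jwSign j (flipBit x i) * v (flipBit (flipBit x i) j)) with ht
  have h1 : huangOp s (huangOp s v) x = ∑ i ∈ S, ∑ j ∈ S, t i j := by
    simp only [huangOp_apply, mul_sum, ht, hS]
  have h2 : ∀ i j, t i j + t j i = if i = j then 2 * v x else 0 := by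
    intro i j
    rcases lt_trichotomy i j with h | rfl | h
    · simp only [ht, jwSign_flipBit, flipBit_comm x i j, if_pos h, if_neg h.not_gt, if_neg h.ne]
      ring
    · simp only [ht, jwSign_flipBit, flipBit_flipBit, lt_irrefl, if_false, if_true]
      rcases jwSign_eq i x with h | h <;> rw [h] <;> ring
    · simp only [ht, jwSign_flipBit, flipBit_comm x i j, if_pos h, if_neg h.not_gt, if_neg h.ne']
      ring
  have h3 : 2 * ∑ i ∈ S, ∑ j ∈ S, t i j = 2 * (hamWeight s * v x) := by
    calc 2 * ∑ i ∈ S, ∑ j ∈ S, t i j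
        = ∑ i ∈ S, ∑ j ∈ S, t i j + ∑ i ∈ S, ∑ j ∈ S, t j i := by
          rw [two_mul]; congr 1; exact sum_comm
      _ = ∑ i ∈ S, ∑ j ∈ S, (t i j + t j i) := by simp_rw [sum_add_distrib]
      _ = ∑ i ∈ S, 2 * v x := by
          refine sum_congr rfl fun i hi => ?_
          simp_rw [h2]
          rw [sum_ite_eq, if_pos hi]
      _ = 2 * (hamWeight s * v x) := by
          rw [sum_const, nsmul_eq_mul, hamWeight]; ring
  rw [h1, Pi.smul_apply, smul_eq_mul]
  linarith

/-! ### Counting points of the subcube -/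

/-- The subcube of all strings below `s`. -/
def subcube {n : ℕ} (s : Fin n → Bool) : Finset (Fin n → Bool) := univ.filter fun x => ∀ i, x i ≤ s i

lemma flipBit_mem_subcube {n : ℕ} {s x : Fin n → Bool} {i : Fin n} (hi : s i = true) :
    flipBit x i ∈ subcube s ↔ x ∈ subcube s := by
  simp only [subcube, mem_filter, mem_univ, true_and]
  refine forall_congr' fun k => ?_
  rcases eq_or_ne k i with rfl | h
  · simp [hi, Bool.le_true]
  · simp [flipBit, h]

lemma sum_sign_eq {α : Type*} (C : Finset α) (g : α → ℝ) (hg : ∀ x, g x = 1 ∨ g x = -1) :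
    ∑ x ∈ C, g x = (#{x ∈ C | g x = 1} : ℝ) - #{x ∈ C | g x ≠ 1} := by
  rw [← sum_filter_add_sum_filter_not C (fun x => g x = 1),
    sum_congr rfl (g := fun _ => (1 : ℝ)) fun x hx => (mem_filter.1 hx).2,
    sum_congr rfl (g := fun _ => (-1 : ℝ)) fun x hx => (hg x).resolve_left (mem_filter.1 hx).2]
  simp
  ring

lemma sum_parSign {n : ℕ} (s : Fin n → Bool) (hs : 0 < hamWeight s) :
    ∑ x ∈ subcube s, parSign x = 0 := by
  obtain ⟨i, hi⟩ := card_pos.1 hs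
  replace hi : s i = true := (mem_filter.1 hi).2
  have h : ∑ x ∈ subcube s, parSign x = ∑ x ∈ subcube s, -parSign x := by
    refine sum_nbij' (flipBit · i) (flipBit · i) ?_ ?_ ?_ ?_ ?_
    · exact fun x hx => (flipBit_mem_subcube hi).2 hx
    · exact fun x hx => (flipBit_mem_subcube hi).2 hx
    · exact fun x _ => flipBit_flipBit x i
    · exact fun x _ => flipBit_flipBit x i
    · exact fun x _ => by rw [parSign_flipBit, neg_neg]
  rw [sum_neg_distrib] at h
  linarith

lemma mobCoeff_eq {n : ℕ} (f : (Fin n → Bool) → Bool) (s : Fin n → Bool) :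
    mobCoeff f s = parSign s * ∑ x ∈ subcube s, (if f x then 1 else 0) * parSign x := by
  have h : ∀ x, ∏ i, bitMob (x i) (s i) = if ∀ i, x i ≤ s i then parSign x * parSign s else 0 := by
    intro x
    simp only [bitMob, prod_ite_zero, mem_univ, true_imp_iff, parSign, prod_mul_distrib]
  rw [mobCoeff, subcube, sum_filter, mul_sum]
  refine sum_congr rfl fun x _ => ?_
  rw [h]
  split_ifs <;> ring

/-- If the coefficient at `s` does not vanish, then one of the two sign classes of
`(-1)^(|x| + f(x))` misses fewer points of the subcube than there are even points in it. -/
lemma exists_large_class {n : ℕ} (f : (Fin n → Bool) → Bool) (s : Fin n → Bool)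
    (hs : 0 < hamWeight s) (hc : mobCoeff f s ≠ 0) :
    ∃ ε : ℝ, #{x ∈ subcube s | parSign x * bitSign (f x) ≠ ε} <
      #{x ∈ subcube s | parSign x = 1} := by
  have hpm : ∀ x, parSign x * bitSign (f x) = 1 ∨ parSign x * bitSign (f x) = -1 := by
    intro x
    rcases parSign_eq x with h | h <;> rcases bitSign_eq (f x) with h' | h' <;> simp [h, h']
  have h0 := sum_parSign s hs
  have hsum : ∑ x ∈ subcube s, parSign x * bitSign (f x) ≠ 0 := by
    have : ∑ x ∈ subcube s, parSign x * bitSign (f x)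
        = ∑ x ∈ subcube s, parSign x
          - 2 * ∑ x ∈ subcube s, (if f x then 1 else 0) * parSign x := by
      rw [mul_sum, ← sum_sub_distrib]
      refine sum_congr rfl fun x _ => ?_
      cases f x <;> simp [bitSign]
      ring
    rw [this, h0, zero_sub]
    rw [mobCoeff_eq] at hc
    simpa using right_ne_zero_of_mul hc
  rw [sum_sign_eq _ _ parSign_eq, sub_eq_zero, Nat.cast_inj] at h0
  rw [sum_sign_eq _ _ hpm, sub_ne_zero, Ne, Nat.cast_inj] at hsum
  have e1 := card_filter_add_card_filter_not (s := subcube s) (fun x => parSign x = 1)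
  have e2 := card_filter_add_card_filter_not (s := subcube s)
    (fun x => parSign x * bitSign (f x) = 1)
  rcases lt_or_gt_of_ne hsum with h | h
  · refine ⟨-1, ?_⟩
    have : ({x ∈ subcube s | parSign x * bitSign (f x) ≠ -1} : Finset _)
        = {x ∈ subcube s | parSign x * bitSign (f x) = 1} := by
      refine filter_congr fun x _ => ?_
      rcases hpm x with h | h <;> rw [h] <;> norm_num
    rw [this]
    simp only [ne_eq] at *
    omega
  · refine ⟨1, ?_⟩
    simp only [ne_eq] at *
    omega

/-! ### The spectral bound -/

/-- An eigenvector of the signed operator for `√|s|` supported on the sign class `ε` of the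
subcube. -/
lemma exists_eigenvector {n : ℕ} (f : (Fin n → Bool) → Bool) (s : Fin n → Bool)
    (hs : 0 < hamWeight s) (ε : ℝ)
    (hε : #{x ∈ subcube s | parSign x * bitSign (f x) ≠ ε} < #{x ∈ subcube s | parSign x = 1}) :
    ∃ v : (Fin n → Bool) → ℝ, v ≠ 0 ∧ huangOp s v = √(hamWeight s : ℝ) • v ∧
      ∀ x, v x ≠ 0 → parSign x * bitSign (f x) = ε := by
  set N : Finset (Fin n → Bool) := {x ∈ subcube s | parSign x * bitSign (f x) ≠ ε} with hN
  set E : Finset (Fin n → Bool) := {x ∈ subcube s | parSign x = 1} with hE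
  set r := √(hamWeight s : ℝ) with hr
  have hrpos : 0 < r := Real.sqrt_pos.2 (by exact_mod_cast hs)
  have hrr : r * r = hamWeight s := Real.mul_self_sqrt (Nat.cast_nonneg _)
  set ext := Function.ExtendByZero.linearMap ℝ ((↑) : E → (Fin n → Bool)) with hext
  set M := huangOp s + r • LinearMap.id with hM
  -- Unknowns: the values of `u` on even points. Equations: `(B + r) u` vanishes on `N`.
  let L : (E → ℝ) →ₗ[ℝ] (N → ℝ) := LinearMap.funLeft ℝ ℝ ((↑) : N → (Fin n → Bool)) ∘ₗ M ∘ₗ ext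
  have hker : L.ker ≠ ⊥ := LinearMap.ker_ne_bot_of_finrank_lt (by simpa using hε)
  obtain ⟨w, hwL, hw0⟩ := (Submodule.ne_bot_iff _).1 hker
  set u := ext w with hu
  have hu_out : ∀ x, x ∉ E → u x = 0 := by
    intro x hx
    rw [hu, hext, Function.ExtendByZero.linearMap_apply, Function.extend_apply' _ _ _
      (by simpa using hx)]
    rfl
  have hMv : ∀ x, M u x = huangOp s u x + r * u x := fun x => by simp [hM]
  refine ⟨M u, ?_, ?_, ?_⟩
  · obtain ⟨x, hx⟩ := Function.ne_iff.1 hw0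
    have hux : u x = w x := by
      rw [hu, hext, Function.ExtendByZero.linearMap_apply, Subtype.val_injective.extend_apply]
    -- `B u` vanishes at the even point `x`, because all neighbours of `x` are odd.
    have hB : huangOp s u x = 0 := by
      rw [huangOp_apply]
      refine sum_eq_zero fun i _ => ?_
      rw [hu_out, mul_zero]
      intro hmem
      have h1 := (mem_filter.1 hmem).2
      rw [parSign_flipBit, (mem_filter.1 x.2).2] at h1
      norm_num at h1
    refine Function.ne_iff.2 ⟨x, ?_⟩
    rw [hMv, hB, zero_add, hux]
    exact mul_ne_zero hrpos.ne' hx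
  · have : M u = huangOp s u + r • u := by simp [hM]
    rw [this, map_add, huangOp_huangOp, map_smul, ← hrr, smul_add, smul_smul, add_comm]
  · intro x hx
    by_contra hne
    apply hx
    by_cases hxC : x ∈ subcube s
    · have hxN : x ∈ N := mem_filter.2 ⟨hxC, hne⟩
      exact congrFun (LinearMap.mem_ker.1 hwL) ⟨x, hxN⟩
    · rw [hMv, huangOp_apply, hu_out x fun h => hxC (mem_filter.1 h).1, mul_zero, add_zero]
      refine sum_eq_zero fun i hi => ?_
      rw [hu_out, mul_zero]
      exact fun h => hxC ((flipBit_mem_subcube (mem_filter.1 hi).2).1 (mem_filter.1 h).1)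

lemma quadForm_le_specNorm {m : Type*} [Fintype m] [DecidableEq m] (A : Matrix m m ℝ) (w : m → ℝ) :
    ∑ x, ∑ y, A x y * (w x * w y) ≤ specNorm A * ∑ x, w x ^ 2 := by
  set W : EuclideanSpace ℝ m := WithLp.toLp 2 w with hW
  set T := LinearMap.toContinuousLinearMap (Matrix.toEuclideanLin A) with hT
  have h1 : ∑ x, ∑ y, A x y * (w x * w y) = inner ℝ (T W) W := by
    have : T W = WithLp.toLp 2 (A.mulVec w) := by
      simp [hT, hW, Matrix.toLpLin_apply]
    rw [this, EuclideanSpace.inner_eq_star_dotProduct]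
    simp only [hW, dotProduct, Matrix.mulVec, Pi.star_apply, star_trivial, mul_sum]
    exact sum_congr rfl fun x _ => sum_congr rfl fun y _ => by ring
  have h2 : ∑ x, w x ^ 2 = ‖W‖ * ‖W‖ := by
    rw [← pow_two, EuclideanSpace.norm_sq_eq]
    simp [hW]
  rw [h1, h2, specNorm, ← mul_assoc]
  exact (real_inner_le_norm _ _).trans (mul_le_mul_of_nonneg_right (T.le_opNorm W) (norm_nonneg _))

/-- Two neighbours in the same sign class of `(-1)^(|x| + f(x))` are joined in the sensitivity
graph. -/
lemma adjMat_flipBit {n : ℕ} (f : (Fin n → Bool) → Bool) (x : Fin n → Bool) (i : Fin n)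
    (h : parSign x * bitSign (f x) = parSign (flipBit x i) * bitSign (f (flipBit x i))) :
    adjMat f x (flipBit x i) = 1 := by
  refine if_pos ⟨⟨i, rfl⟩, fun hf => ?_⟩
  rw [parSign_flipBit, ← hf] at h
  rcases parSign_eq x with h1 | h1 <;> rcases bitSign_eq (f x) with h2 | h2 <;>
    rw [h1, h2] at h <;> norm_num at h

lemma adjMat_nonneg {n : ℕ} (f : (Fin n → Bool) → Bool) (x y : Fin n → Bool) :
    0 ≤ adjMat f x y := by
  unfold adjMat
  split_ifs <;> norm_num

lemma card_le_of_mobCoeff_ne_zero {n : ℕ} (f : (Fin n → Bool) → Bool) (s : Fin n → Bool)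
    (hs : 0 < hamWeight s) (hc : mobCoeff f s ≠ 0) : (hamWeight s : ℝ) ≤ specSens f ^ 2 := by
  obtain ⟨ε, hε⟩ := exists_large_class f s hs hc
  obtain ⟨v, hv0, hBv, hsupp⟩ := exists_eigenvector f s hs ε hε
  set S := univ.filter (fun i => s i = true) with hS
  have hpos : 0 < ∑ x, v x ^ 2 := by
    obtain ⟨x, hx⟩ := Function.ne_iff.1 hv0
    exact sum_pos' (fun _ _ => sq_nonneg _) ⟨x, mem_univ _, by have : v x ≠ 0 := hx; positivity⟩
  have hedge : ∀ x i, v x * (jwSign i x * v (flipBit x i))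
      ≤ adjMat f x (flipBit x i) * (|v x| * |v (flipBit x i)|) := by
    intro x i
    by_cases h0 : v x = 0
    · simp [h0]
    by_cases h1 : v (flipBit x i) = 0
    · simp [h1]
    rw [adjMat_flipBit f x i ((hsupp _ h0).trans (hsupp _ h1).symm), one_mul]
    refine (le_abs_self _).trans_eq ?_
    rw [abs_mul, abs_mul]
    rcases jwSign_eq i x with h | h <;> simp [h]
  have hrow : ∀ x, v x * huangOp s v x ≤ ∑ y, adjMat f x y * (|v x| * |v y|) := by
    intro x
    rw [huangOp_apply, mul_sum]
    refine (sum_le_sum fun i _ => hedge x i).trans ?_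
    rw [← sum_image (f := fun y => adjMat f x y * (|v x| * |v y|)) (s := S) (g := flipBit x)
      (flipBit_injective x).injOn]
    refine sum_le_sum_of_subset_of_nonneg (subset_univ _) fun y _ _ => ?_
    have := adjMat_nonneg f x y
    positivity
  have hmain : √(hamWeight s : ℝ) * ∑ x, v x ^ 2 ≤ specSens f * ∑ x, v x ^ 2 := by
    calc √(hamWeight s : ℝ) * ∑ x, v x ^ 2 = ∑ x, v x * huangOp s v x := by
          rw [hBv, mul_sum]
          exact sum_congr rfl fun x _ => by simp only [Pi.smul_apply, smul_eq_mul]; ring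
      _ ≤ ∑ x, ∑ y, adjMat f x y * (|v x| * |v y|) := sum_le_sum fun x _ => hrow x
      _ ≤ specSens f * ∑ x, |v x| ^ 2 := quadForm_le_specNorm (adjMat f) fun x => |v x|
      _ = specSens f * ∑ x, v x ^ 2 := by simp_rw [sq_abs]
  exact Real.sqrt_le_iff.1 (le_of_mul_le_mul_right hmain hpos) |>.2

/-- **Huang's theorem (spectral form).**
For every total Boolean function `f : {0,1}^n → {0,1}`,
`deg(f) ≤ λ(f)²`. -/
theorem deg_le_sq_specSens {n : ℕ} (f : (Fin n → Bool) → Bool) :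
    (bdeg f : ℝ) ≤ specSens f ^ 2 := by
  rcases Nat.eq_zero_or_pos (bdeg f) with h0 | hd
  · rw [h0, Nat.cast_zero]
    exact sq_nonneg _
  · obtain ⟨s, hc, hle⟩ := exists_mobCoeff_ne_zero f hd
    exact (Nat.cast_le.2 hle).trans (card_le_of_mobCoeff_ne_zero f s (hd.trans_le hle) hc)
end

section
/- Assume that deg(g) ≤ s(g)² holds for every total Boolean function g (on any number of variables). Then for every total Boolean function f : {0,1}^n → {0,1} we have deg(f) ≤ s₀(f)·s₁(f). -/
/-! ### Degree and multilinear coefficients -/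

/-- The value of a Boolean as a real number. -/
def bval (b : Bool) : ℝ := if b then 1 else 0

/-- Möbius weight of one coordinate: `mwt true` is `±1` (the difference functional) and
`mwt false` is evaluation at `false`. -/
def mwt (s b : Bool) : ℝ := if s then (if b then 1 else -1) else (if b then 0 else 1)

/-- The coefficient of `∏_{i ∈ S} x_i` in the multilinear expansion of `f`, where `s` is the
indicator of `S`. -/
def mcoef {n : ℕ} (f : (Fin n → Bool) → Bool) (s : Fin n → Bool) : ℝ :=
  ∑ x, (∏ i, mwt (s i) (x i)) * bval (f x)

/-- The number of variables selected by `s`. -/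
def wt {n : ℕ} (s : Fin n → Bool) : ℕ := (Finset.univ.filter fun i => s i = true).card

/-- `p` agrees with `f` on the Boolean cube. -/
def Represents {n : ℕ} (p : MvPolynomial (Fin n) ℝ) (f : (Fin n → Bool) → Bool) : Prop :=
  ∀ x : Fin n → Bool, MvPolynomial.eval (fun i => bval (x i)) p = bval (f x)

lemma bdeg_le {n : ℕ} {f : (Fin n → Bool) → Bool} {p : MvPolynomial (Fin n) ℝ} (h : Represents p f) :
    bdeg f ≤ p.totalDegree :=
  Nat.sInf_le ⟨p, rfl, h⟩

/-- Interchange of sum and product over the Boolean cube. -/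
lemma sum_cube_prod {n : ℕ} (F : Fin n → Bool → ℝ) :
    ∑ x : Fin n → Bool, ∏ i, F i (x i) = ∏ i, ∑ b, F i b := by
  rw [Finset.prod_univ_sum, Fintype.piFinset_univ]

/-- A monomial that misses a variable selected by `s` is killed by the `s`-th coefficient
functional, and a monomial of degree less than `wt s` must miss one. -/
lemma mcoef_eq_zero_of_totalDegree_lt {n : ℕ} {f : (Fin n → Bool) → Bool}
    {p : MvPolynomial (Fin n) ℝ} (h : Represents p f) (s : Fin n → Bool) (hs : p.totalDegree < wt s) :
    mcoef f s = 0 := by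
  have h1 : mcoef f s = ∑ m ∈ p.support, p.coeff m *
      ∑ x : Fin n → Bool, ∏ i, (mwt (s i) (x i) * bval (x i) ^ m i) := by
    simp only [mcoef, Finset.mul_sum]
    rw [Finset.sum_comm]
    refine Finset.sum_congr rfl fun x _ => ?_
    rw [← h x, MvPolynomial.eval_eq', Finset.mul_sum]
    refine Finset.sum_congr rfl fun m _ => ?_
    rw [Finset.prod_mul_distrib]
    ring
  rw [h1]
  refine Finset.sum_eq_zero fun m hm => ?_
  rw [sum_cube_prod fun i b => mwt (s i) b * bval b ^ m i]
  obtain ⟨i, hi, hmi⟩ : ∃ i, s i = true ∧ m i = 0 := by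
    by_contra! hc
    have h2 : (m.sum fun _ e => e) ≤ p.totalDegree := MvPolynomial.le_totalDegree hm
    have h3 : wt s ≤ m.sum fun _ e => e := by
      rw [Finsupp.sum_fintype _ _ (fun _ => rfl), wt, Finset.card_filter]
      refine Finset.sum_le_sum fun i _ => ?_
      split_ifs with hi
      · exact Nat.one_le_iff_ne_zero.mpr (hc i hi)
      · exact Nat.zero_le _
    omega
  rw [Finset.prod_eq_zero (Finset.mem_univ i), mul_zero]
  simp [hi, hmi, mwt]

/-- The multilinear expansion of `f`. -/
noncomputable def mpoly {n : ℕ} (f : (Fin n → Bool) → Bool) : MvPolynomial (Fin n) ℝ :=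
  ∑ s : Fin n → Bool, MvPolynomial.C (mcoef f s) *
    ∏ i ∈ Finset.univ.filter (fun i => s i = true), MvPolynomial.X i

/-- Möbius inversion on the Boolean cube. -/
lemma repr_mpoly {n : ℕ} (f : (Fin n → Bool) → Bool) : Represents (mpoly f) f := by
  intro y
  have h1 : MvPolynomial.eval (fun i => bval (y i)) (mpoly f) =
      ∑ x, bval (f x) * ∑ s : Fin n → Bool,
        ∏ i, (mwt (s i) (x i) * if s i = true then bval (y i) else 1) := by
    simp only [mpoly, map_sum, map_mul, map_prod, MvPolynomial.eval_C, MvPolynomial.eval_X,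
      mcoef, Finset.sum_mul, Finset.mul_sum]
    rw [Finset.sum_comm]
    refine Finset.sum_congr rfl fun x _ => Finset.sum_congr rfl fun s _ => ?_
    rw [Finset.prod_mul_distrib, Finset.prod_filter]
    ring
  have h2 : ∀ x : Fin n → Bool, (∑ s : Fin n → Bool,
      ∏ i, (mwt (s i) (x i) * if s i = true then bval (y i) else 1)) = if x = y then 1 else 0 := by
    intro x
    rw [sum_cube_prod fun i b => mwt b (x i) * if b = true then bval (y i) else 1]
    have h3 : ∀ i, (∑ b, mwt b (x i) * if b = true then bval (y i) else 1) =
        if x i = y i then 1 else 0 := by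
      intro i
      cases x i <;> cases y i <;> simp [mwt, bval]
    simp only [h3]
    rw [Finset.prod_ite_zero]
    simp [funext_iff]
  simp only [h1, h2]
  simp

lemma exists_mcoef_ne_zero {n : ℕ} (f : (Fin n → Bool) → Bool) (hf : 0 < bdeg f) :
    ∃ s, bdeg f ≤ wt s ∧ mcoef f s ≠ 0 := by
  by_contra! hc
  have h1 : (mpoly f).totalDegree ≤ bdeg f - 1 := by
    refine MvPolynomial.totalDegree_finsetSum_le fun s _ => ?_
    by_cases hs : bdeg f ≤ wt s
    · simp [hc s hs]
    · refine (MvPolynomial.totalDegree_mul _ _).trans ?_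
      have h2 := MvPolynomial.totalDegree_finsetProd (R := ℝ)
        (Finset.univ.filter (fun i => s i = true)) (fun i => MvPolynomial.X i)
      simp only [MvPolynomial.totalDegree_X, Finset.sum_const, smul_eq_mul, mul_one] at h2
      rw [MvPolynomial.totalDegree_C]
      unfold wt at hs
      omega
  have := bdeg_le (repr_mpoly f)
  omega

lemma exists_repr {n : ℕ} (f : (Fin n → Bool) → Bool) :
    ∃ p, Represents p f ∧ p.totalDegree = bdeg f := by
  obtain ⟨p, hp, h⟩ := Nat.sInf_mem
    (s := {d | ∃ p : MvPolynomial (Fin n) ℝ, p.totalDegree = d ∧ Represents p f})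
    ⟨_, mpoly f, rfl, repr_mpoly f⟩
  exact ⟨p, h, hp⟩

lemma wt_le_bdeg {n : ℕ} {f : (Fin n → Bool) → Bool} {s : Fin n → Bool} (h : mcoef f s ≠ 0) :
    wt s ≤ bdeg f := by
  obtain ⟨p, hp, hd⟩ := exists_repr f
  by_contra! hc
  exact h (mcoef_eq_zero_of_totalDegree_lt hp s (hd ▸ hc))

lemma bdeg_le_bdeg_not {n : ℕ} (f : (Fin n → Bool) → Bool) : bdeg f ≤ bdeg fun x => !f x := by
  obtain ⟨p, hp, hd⟩ := exists_repr fun x => !f x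
  have h : Represents (MvPolynomial.C 1 - p) f := by
    intro x
    rw [map_sub, hp x]
    cases hx : f x <;> simp [bval, hx]
  refine (bdeg_le h).trans ((MvPolynomial.totalDegree_sub _ _).trans ?_)
  simp [hd]

/-! ### Degree of a conjunction of disjoint copies -/

/-- The `j`-th block of length `n` of `y`. -/
def block {a n : ℕ} (y : Fin (a * n) → Bool) (j : Fin a) : Fin n → Bool :=
  fun i => y (finProdFinEquiv (j, i))

/-- The conjunction of `a` copies of `f` on disjoint sets of variables. -/
def andCopies {n : ℕ} (a : ℕ) (f : (Fin n → Bool) → Bool) : (Fin (a * n) → Bool) → Bool :=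
  fun y => decide (∀ j, f (block y j) = true)

/-- A string of length `a * n` as a family of `a` blocks. -/
def blockEquiv (a n : ℕ) : (Fin (a * n) → Bool) ≃ (Fin a → Fin n → Bool) :=
  (Equiv.arrowCongr finProdFinEquiv.symm (Equiv.refl Bool)).trans (Equiv.curry _ _ _)

lemma blockEquiv_apply {a n : ℕ} (y : Fin (a * n) → Bool) : blockEquiv a n y = block y := rfl

/-- The string each of whose `a` blocks is `s`. -/
def repeatStr {n : ℕ} (a : ℕ) (s : Fin n → Bool) : Fin (a * n) → Bool :=
  fun k => s (finProdFinEquiv.symm k).2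

lemma wt_repeatStr {n : ℕ} (a : ℕ) (s : Fin n → Bool) : wt (repeatStr a s) = a * wt s := by
  simp only [wt, Finset.card_filter]
  rw [← finProdFinEquiv.sum_comp, Fintype.sum_prod_type]
  simp [repeatStr]

lemma mcoef_andCopies {n : ℕ} (a : ℕ) (f : (Fin n → Bool) → Bool) (s : Fin n → Bool) :
    mcoef (andCopies a f) (repeatStr a s) = mcoef f s ^ a := by
  have h1 : mcoef (andCopies a f) (repeatStr a s) =
      ∑ z : Fin a → Fin n → Bool, ∏ j, ((∏ i, mwt (s i) (z j i)) * bval (f (z j))) := by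
    rw [← (blockEquiv a n).sum_comp]
    refine Finset.sum_congr rfl fun y _ => ?_
    rw [Finset.prod_mul_distrib, ← finProdFinEquiv.prod_comp, Fintype.prod_prod_type]
    congr 1
    · simp [repeatStr, blockEquiv_apply, block]
    · rw [blockEquiv_apply]
      unfold bval
      rw [Finset.prod_ite_zero]
      simp [andCopies]
  have h2 := Finset.prod_univ_sum (fun _ : Fin a => (Finset.univ : Finset (Fin n → Bool)))
    (fun _ x => (∏ i, mwt (s i) (x i)) * bval (f x))
  rw [h1, ← Fintype.piFinset_univ, ← h2]
  simp [mcoef]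

lemma bdeg_andCopies {n : ℕ} (a : ℕ) (f : (Fin n → Bool) → Bool) :
    a * bdeg f ≤ bdeg (andCopies a f) := by
  rcases Nat.eq_zero_or_pos (bdeg f) with h0 | h0
  · simp [h0]
  · obtain ⟨s, hs, hne⟩ := exists_mcoef_ne_zero f h0
    calc a * bdeg f ≤ a * wt s := Nat.mul_le_mul_left a hs
      _ = wt (repeatStr a s) := (wt_repeatStr a s).symm
      _ ≤ _ := wt_le_bdeg (by rw [mcoef_andCopies]; exact pow_ne_zero a hne)

/-! ### Sensitivity of a conjunction of disjoint copies -/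

lemma sensAt_le {n : ℕ} (f : (Fin n → Bool) → Bool) (x : Fin n → Bool) :
    sensAt f x ≤ sensB f (f x) :=
  Finset.le_sup (f := sensAt f) (by simp)

lemma sensB_le {n k : ℕ} {f : (Fin n → Bool) → Bool} {b : Bool}
    (h : ∀ x, f x = b → sensAt f x ≤ k) : sensB f b ≤ k :=
  Finset.sup_le fun x hx => h x (by simpa using hx)

lemma sensB_not {n : ℕ} (f : (Fin n → Bool) → Bool) (b : Bool) :
    sensB (fun x => !f x) b ≤ sensB f (!b) := by
  refine sensB_le fun x hx => ?_
  have h := sensAt_le f x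
  rw [show f x = !b by rw [← hx]; simp] at h
  simpa [sensAt] using h

lemma block_flipBit_same {a n : ℕ} (y : Fin (a * n) → Bool) (j : Fin a) (i : Fin n) :
    block (flipBit y (finProdFinEquiv (j, i))) j = flipBit (block y j) i := by
  funext i'
  simp only [block, flipBit, Function.update_apply, EmbeddingLike.apply_eq_iff_eq, Prod.mk.injEq,
    true_and]

lemma block_flipBit_ne {a n : ℕ} (y : Fin (a * n) → Bool) {j j' : Fin a} (i : Fin n)
    (h : j' ≠ j) : block (flipBit y (finProdFinEquiv (j, i))) j' = block y j' := by
  funext i'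
  simp [block, flipBit, h]

/-- Sensitivity is counted block by block. -/
lemma sensAt_eq_sum {a n : ℕ} (g : (Fin (a * n) → Bool) → Bool) (y : Fin (a * n) → Bool) :
    sensAt g y = ∑ j : Fin a, (Finset.univ.filter fun i : Fin n =>
      g (flipBit y (finProdFinEquiv (j, i))) ≠ g y).card := by
  simp only [sensAt, Finset.card_filter]
  rw [← finProdFinEquiv.sum_comp, Fintype.sum_prod_type]

lemma sensB_andCopies_true {n : ℕ} (a : ℕ) (f : (Fin n → Bool) → Bool) :
    sensB (andCopies a f) true ≤ a * sensB f true := by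
  refine sensB_le fun y hy => ?_
  have hall : ∀ j, f (block y j) = true := of_decide_eq_true hy
  rw [sensAt_eq_sum]
  calc _ ≤ ∑ _j : Fin a, sensB f true := Finset.sum_le_sum fun j _ => ?_
    _ = a * sensB f true := by simp
  have h := sensAt_le f (block y j)
  rw [hall j] at h
  refine le_trans (Finset.card_le_card fun i hi => ?_) h
  simp only [Finset.mem_filter, Finset.mem_univ, true_and, hy, hall j] at hi ⊢
  intro hc
  refine hi (decide_eq_true fun j' => ?_)
  by_cases hj : j' = j
  · rw [hj, block_flipBit_same, hc]
  · rw [block_flipBit_ne y i hj, hall j']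

/-- At a `0`-input of the conjunction, all sensitive coordinates lie in one block `j₀` on which
`f` takes the value `0`. -/
lemma sensB_andCopies_false {n : ℕ} (a : ℕ) (f : (Fin n → Bool) → Bool) :
    sensB (andCopies a f) false ≤ sensB f false := by
  refine sensB_le fun y hy => ?_
  obtain ⟨j₀, hj₀⟩ : ∃ j, f (block y j) ≠ true := by
    simpa [andCopies] using hy
  rw [sensAt_eq_sum]
  have hsens : ∀ j i, andCopies a f (flipBit y (finProdFinEquiv (j, i))) ≠ andCopies a f y →
      j = j₀ ∧ f (flipBit (block y j₀) i) = true := by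
    intro j i h
    rw [hy, ne_eq, Bool.not_eq_false] at h
    have hall : ∀ j', f (block (flipBit y (finProdFinEquiv (j, i))) j') = true :=
      of_decide_eq_true h
    have hj : j = j₀ := by
      by_contra hne
      exact hj₀ (by rw [← block_flipBit_ne y i (Ne.symm hne)]; exact hall j₀)
    subst hj
    exact ⟨rfl, by rw [← block_flipBit_same]; exact hall j⟩
  rw [Finset.sum_eq_single j₀]
  · have hf : f (block y j₀) = false := by simpa using hj₀
    have h := sensAt_le f (block y j₀)
    rw [hf] at h
    refine le_trans (Finset.card_le_card fun i hi => ?_) h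
    simp only [Finset.mem_filter, Finset.mem_univ, true_and] at hi ⊢
    rw [(hsens j₀ i hi).2, hf]
    simp
  · intro j _ hj
    rw [Finset.card_eq_zero, Finset.filter_eq_empty_iff]
    exact fun i _ h => hj (hsens j i h).1
  · simp

/-! ### Amplification -/

lemma sens_le_max {n : ℕ} (f : (Fin n → Bool) → Bool) :
    sens f ≤ max (sensB f true) (sensB f false) := by
  refine Finset.sup_le fun x _ => (sensAt_le f x).trans ?_
  cases f x
  · exact le_max_right _ _
  · exact le_max_left _ _

lemma amplified_bound
    (huang : ∀ (m : ℕ) (g : (Fin m → Bool) → Bool), bdeg g ≤ sens g ^ 2)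
    {n : ℕ} (f : (Fin n → Bool) → Bool) (a b : ℕ) :
    b * (a * bdeg f) ≤ max (b * sensB f false) (a * sensB f true) ^ 2 := by
  set g : (Fin (a * n) → Bool) → Bool := fun x => !andCopies a f x with hg
  have hd : b * (a * bdeg f) ≤ bdeg (andCopies b g) :=
    (Nat.mul_le_mul_left b ((bdeg_andCopies a f).trans (bdeg_le_bdeg_not _))).trans
      (bdeg_andCopies b g)
  have h1 : sensB (andCopies b g) true ≤ b * sensB f false :=
    (sensB_andCopies_true b g).trans
      (Nat.mul_le_mul_left b ((sensB_not _ _).trans (sensB_andCopies_false a f)))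
  have h0 : sensB (andCopies b g) false ≤ a * sensB f true :=
    (sensB_andCopies_false b g).trans ((sensB_not _ _).trans (sensB_andCopies_true a f))
  exact hd.trans ((huang _ _).trans
    (Nat.pow_le_pow_left ((sens_le_max _).trans (max_le_max h1 h0)) 2))

/-- If `deg(g) ≤ s(g)²` holds for every total Boolean function `g` (on any number
of variables), then `deg(f) ≤ s₀(f)·s₁(f)` for every total Boolean function `f`. -/
theorem deg_le_sens0_mul_sens1_of_huang
    (huang : ∀ (m : ℕ) (g : (Fin m → Bool) → Bool), bdeg g ≤ sens g ^ 2)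
    {n : ℕ} (f : (Fin n → Bool) → Bool) :
    bdeg f ≤ sensB f false * sensB f true := by
  rcases Nat.eq_zero_or_pos (sensB f false) with h0 | h0
  · have h := amplified_bound huang f 1 (sensB f true ^ 2 + 1)
    rw [h0] at h ⊢
    simp only [mul_zero, one_mul, zero_mul, Nat.zero_max] at h ⊢
    nlinarith
  rcases Nat.eq_zero_or_pos (sensB f true) with h1 | h1
  · have h := amplified_bound huang f (sensB f false ^ 2 + 1) 1
    rw [h1] at h ⊢
    simp only [mul_zero, one_mul, Nat.max_zero] at h ⊢
    nlinarith
  · have h := amplified_bound huang f (sensB f false) (sensB f true)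
    rw [mul_comm (sensB f true) (sensB f false), max_self] at h
    refine Nat.le_of_mul_le_mul_left ?_ (Nat.mul_pos h0 h1)
    calc _ = sensB f true * (sensB f false * bdeg f) := by ring
      _ ≤ _ := h
      _ = _ := by ring
end

section
/- For every n ≥ 1, Huang's signed hypercube matrix satisfies B_n² = n·I, where I is the 2^n × 2^n identity matrix. -/
/-! Induction on `n`, starting from `B₀ = 0`. In block form,
`[[B, I], [I, -B]]² = [[B² + I, B - B], [B - B, I + B²]]`, so `B² = n·I` gives `(n + 1)·I` at the
next step. The index type `Fin (n + 1) → Bool` is split as `Bool × (Fin n → Bool)` through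
`Fin.cons`, which turns the defining recursion into the block form.
-/

/-- Huang's signed adjacency matrix of the `n`-dimensional Boolean hypercube,
defined recursively in 2×2 block form (indexed by the first bit):
`B_0 = [0]`, and `B_n = [[B_{n-1}, I], [I, -B_{n-1}]]`.
In particular `B_1 = [[0,1],[1,0]]`. -/
def HuangB : (n : ℕ) → Matrix (Fin n → Bool) (Fin n → Bool) ℝ
  | 0 => 0
  | (n + 1) => fun x y =>
      if x 0 = y 0 then
        (if x 0 = false then (1 : ℝ) else -1) *
          HuangB n (fun i => x i.succ) (fun i => y i.succ)
      else if (fun i : Fin n => x i.succ) = (fun i : Fin n => y i.succ) then 1 else 0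

/-- The block form of `HuangB (n + 1)`, the blocks being indexed by the first bits `a` and `b`. -/
lemma huangB_cons (n : ℕ) (a b : Bool) (x y : Fin n → Bool) :
    HuangB (n + 1) (Fin.cons a x : Fin (n + 1) → Bool) (Fin.cons b y : Fin (n + 1) → Bool) =
      if a = b then (if a = false then (1 : ℝ) else -1) * HuangB n x y
      else (1 : Matrix (Fin n → Bool) (Fin n → Bool) ℝ) x y := by
  simp [HuangB, Matrix.one_apply]

/-- A sum over `Fin (n + 1) → Bool`, split by the first bit. -/
lemma sum_bool_cons (n : ℕ) (f : (Fin (n + 1) → Bool) → ℝ) :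
    ∑ w, f w = ∑ z : Fin n → Bool, f (Fin.cons true z) +
      ∑ z : Fin n → Bool, f (Fin.cons false z) := by
  have h := (Fin.consEquiv (fun _ : Fin (n + 1) => Bool)).sum_comp f
  rw [← h, Fintype.sum_prod_type, Fintype.sum_bool]
  rfl

lemma huangB_sq_aux (n : ℕ) :
    HuangB n * HuangB n = (n : ℝ) • (1 : Matrix (Fin n → Bool) (Fin n → Bool) ℝ) := by
  induction n with
  | zero => simp [HuangB]
  | succ n ih =>
    ext u v
    induction u using Fin.consCases with | _ a x
    induction v using Fin.consCases with | _ b y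
    have h := congrFun (congrFun ih x) y
    rw [Matrix.mul_apply] at h
    rw [Matrix.mul_apply, sum_bool_cons]
    simp only [huangB_cons]
    cases a <;> cases b <;>
      simp [Matrix.one_apply, Fin.cons_inj] at h ⊢ <;>
      rw [h] <;> split_ifs <;> ring

/-- For every `n ≥ 1`, Huang's signed hypercube matrix satisfies `Bₙ² = n·I`. -/
theorem huangB_sq (n : ℕ) (hn : 1 ≤ n) :
    HuangB n * HuangB n = (n : ℝ) • (1 : Matrix (Fin n → Bool) (Fin n → Bool) ℝ) := by
  exact huangB_sq_aux n
end

section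
/- For every nonconstant total Boolean function f : {0,1}^n → {0,1}, the Koutsoupias complexity equals the spectral sensitivity: K(f) = λ(f). Moreover, the maximum in the definition of K(f) is attained at A = f⁻¹(0) and B = f⁻¹(1). -/
/-- Koutsoupias' matrix `Q_{A,B}`: rows indexed by `A`, columns by `B`, with a `1`
exactly at pairs of Hamming distance `1`. -/
def Qmat {n : ℕ} (A B : Finset (Fin n → Bool)) : Matrix A B ℝ :=
  fun x y => if hammingDist (x : Fin n → Bool) (y : Fin n → Bool) = 1 then 1 else 0

/-- Koutsoupias complexity: the maximum of `‖Q_{A,B}‖` over `A ⊆ f⁻¹(0)`, `B ⊆ f⁻¹(1)`. -/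
noncomputable def Kout {n : ℕ} (f : (Fin n → Bool) → Bool) : ℝ :=
  sSup {r | ∃ A B : Finset (Fin n → Bool),
    (∀ x ∈ A, f x = false) ∧ (∀ y ∈ B, f y = true) ∧ r = specNorm (Qmat A B)}

theorem specNorm_nonneg {m k : Type*} [Fintype m] [Fintype k] [DecidableEq k]
    (M : Matrix m k ℝ) : 0 ≤ specNorm M := norm_nonneg _

theorem specNorm_transpose {m k : Type*} [Fintype m] [Fintype k] [DecidableEq m] [DecidableEq k]
    (M : Matrix m k ℝ) : specNorm M.transpose = specNorm M := by
  have h := Matrix.l2_opNorm_conjTranspose M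
  rw [Matrix.conjTranspose_eq_transpose_of_trivial, Matrix.l2_opNorm_def, Matrix.l2_opNorm_def] at h
  exact h

theorem sum_sq_mulVec_le {m k : Type*} [Fintype m] [Fintype k] [DecidableEq k]
    (M : Matrix m k ℝ) (v : k → ℝ) :
    ∑ i, (∑ j, M i j * v j) ^ 2 ≤ specNorm M ^ 2 * ∑ j, v j ^ 2 := by
  have h := (LinearMap.toContinuousLinearMap (Matrix.toEuclideanLin M)).le_opNorm
    (WithLp.toLp 2 v)
  have h2 := pow_le_pow_left₀ (norm_nonneg _) h 2
  rw [mul_pow, EuclideanSpace.real_norm_sq_eq, EuclideanSpace.real_norm_sq_eq] at h2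
  exact h2

theorem specNorm_le {m k : Type*} [Fintype m] [Fintype k] [DecidableEq k]
    (M : Matrix m k ℝ) {c : ℝ} (hc : 0 ≤ c)
    (h : ∀ v : k → ℝ, ∑ i, (∑ j, M i j * v j) ^ 2 ≤ c ^ 2 * ∑ j, v j ^ 2) :
    specNorm M ≤ c := by
  refine ContinuousLinearMap.opNorm_le_bound _ hc fun v => ?_
  refine (sq_le_sq₀ (norm_nonneg _) (by positivity)).1 ?_
  rw [mul_pow, EuclideanSpace.real_norm_sq_eq, EuclideanSpace.real_norm_sq_eq]
  exact h v

theorem hammingDist_eq_one_iff {n : ℕ} (x y : Fin n → Bool) :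
    hammingDist x y = 1 ↔ ∃ i, y = flipBit x i := by
  unfold hammingDist
  rw [Finset.card_eq_one]
  refine exists_congr fun i => ?_
  rw [Finset.ext_iff, funext_iff]
  refine forall_congr' fun j => ?_
  simp only [Finset.mem_filter, Finset.mem_univ, true_and, Finset.mem_singleton, flipBit,
    Function.update_apply]
  split_ifs with hji
  · subst hji
    cases x j <;> cases y j <;> simp
  · simp [hji, eq_comm]

theorem adjMat_of_ne {n : ℕ} (f : (Fin n → Bool) → Bool) {x y : Fin n → Bool} (h : f x ≠ f y) :
    adjMat f x y = if hammingDist x y = 1 then 1 else 0 := by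
  simp [adjMat, h, hammingDist_eq_one_iff]

theorem adjMat_of_eq {n : ℕ} (f : (Fin n → Bool) → Bool) {x y : Fin n → Bool} (h : f x = f y) :
    adjMat f x y = 0 := by
  simp [adjMat, h]

theorem specNorm_Qmat_le {n : ℕ} (f : (Fin n → Bool) → Bool) (A B : Finset (Fin n → Bool))
    (hA : ∀ x ∈ A, f x = false) (hB : ∀ y ∈ B, f y = true) :
    specNorm (Qmat A B) ≤ specSens f := by
  refine specNorm_le _ (specNorm_nonneg _) fun v => ?_
  -- the extension of `v` by zero
  let w : (Fin n → Bool) → ℝ := fun y => if h : y ∈ B then v ⟨y, h⟩ else 0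
  have hwv : ∀ y : B, w y = v y := fun y => by simp [w]
  have hw0 : ∀ y, y ∉ B → w y = 0 := fun y hy => by simp [w, hy]
  have hw : ∑ y, w y ^ 2 = ∑ y, v y ^ 2 := by
    rw [← Finset.sum_subset (Finset.subset_univ B) (fun y _ hy => by simp [hw0 y hy]),
      ← Finset.sum_coe_sort]
    simp only [hwv]
  have hrow : ∀ x : A, ∑ y, Qmat A B x y * v y = ∑ y, adjMat f x y * w y := by
    intro x
    rw [← Finset.sum_subset (Finset.subset_univ B) (fun y _ hy => by simp [hw0 y hy]),
      ← Finset.sum_coe_sort B]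
    refine Finset.sum_congr rfl fun y _ => ?_
    rw [hwv, adjMat_of_ne f (by simp [hA x x.2, hB y y.2])]
    rfl
  simp only [hrow]
  rw [← hw, Finset.sum_coe_sort A fun x : Fin n → Bool => (∑ y, adjMat f x y * w y) ^ 2]
  exact (Finset.sum_le_sum_of_subset_of_nonneg (Finset.subset_univ A)
    fun _ _ _ => sq_nonneg _).trans (sum_sq_mulVec_le (adjMat f) w)

/-- On the fibre of `f` over `b`, the product `A_f v` only involves the values of `v` on the
opposite fibre. -/
theorem sum_adjMat_mul {n : ℕ} (f : (Fin n → Bool) → Bool) (v : (Fin n → Bool) → ℝ)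
    {b : Bool} {x : Fin n → Bool} (hx : f x = b) :
    ∑ y, adjMat f x y * v y =
      ∑ y : (Finset.univ.filter fun y => f y = !b : Finset (Fin n → Bool)),
        (if hammingDist x (y : Fin n → Bool) = 1 then 1 else 0) * v y := by
  rw [Finset.sum_coe_sort (Finset.univ.filter fun y => f y = !b)
    fun y => (if hammingDist x y = 1 then (1 : ℝ) else 0) * v y, Finset.sum_filter]
  refine Finset.sum_congr rfl fun y _ => ?_
  split_ifs with h h1
  · rw [adjMat_of_ne f (by simp [hx, h]), if_pos h1]
  · rw [adjMat_of_ne f (by simp [hx, h]), if_neg h1]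
  · rw [adjMat_of_eq f (by rw [hx]; cases b <;> simp_all), zero_mul]

theorem specSens_le_specNorm_Qmat {n : ℕ} (f : (Fin n → Bool) → Bool) :
    specSens f ≤ specNorm (Qmat (Finset.univ.filter fun x => f x = false)
        (Finset.univ.filter fun y => f y = true)) := by
  refine specNorm_le _ (specNorm_nonneg _) fun v => ?_
  set A : Finset (Fin n → Bool) := Finset.univ.filter fun x => f x = false with hA
  set B : Finset (Fin n → Bool) := Finset.univ.filter fun x => f x = true with hB
  have hsplit : ∀ g : (Fin n → Bool) → ℝ, ∑ x, g x = ∑ x : A, g x + ∑ x : B, g x := by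
    intro g
    rw [Finset.sum_coe_sort A, Finset.sum_coe_sort B,
      ← Finset.sum_filter_add_sum_filter_not Finset.univ (fun x => f x = false)]
    simp [hA, hB]
  have h1 := sum_sq_mulVec_le (Qmat A B) (fun y => v y)
  have h2 := sum_sq_mulVec_le (Qmat A B).transpose (fun y => v y)
  rw [specNorm_transpose] at h2
  have e1 : ∀ x : A, ∑ y, adjMat f x y * v y = ∑ y : B, Qmat A B x y * v y := fun x =>
    sum_adjMat_mul f v (b := false) (Finset.mem_filter.1 x.2).2
  have e2 : ∀ x : B, ∑ y, adjMat f x y * v y = ∑ y : A, (Qmat A B).transpose x y * v y := by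
    intro x
    rw [sum_adjMat_mul f v (b := true) (Finset.mem_filter.1 x.2).2]
    refine Finset.sum_congr rfl fun y _ => ?_
    rw [hammingDist_comm]
    rfl
  rw [hsplit fun x => (∑ y, adjMat f x y * v y) ^ 2, hsplit fun x => v x ^ 2]
  simp only [e1, e2]
  linarith

/-- For every nonconstant total Boolean function `f`, the Koutsoupias complexity equals
the spectral sensitivity, `K(f) = λ(f)`; moreover the maximum in the definition of
`K(f)` is attained at `A = f⁻¹(0)` and `B = f⁻¹(1)`. -/
theorem kout_eq_specSens {n : ℕ} (f : (Fin n → Bool) → Bool)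
    (hf : ∃ x y, f x ≠ f y) :
    Kout f = specSens f ∧
    specNorm (Qmat (Finset.univ.filter fun x => f x = false)
        (Finset.univ.filter fun y => f y = true)) = specSens f := by
  have h := (specNorm_Qmat_le f (Finset.univ.filter fun x => f x = false)
    (Finset.univ.filter fun y => f y = true) (by simp) (by simp)).antisymm
    (specSens_le_specNorm_Qmat f)
  refine ⟨IsGreatest.csSup_eq ⟨⟨_, _, by simp, by simp, h.symm⟩, ?_⟩, h⟩
  rintro r ⟨A, B, hA, hB, rfl⟩
  exact specNorm_Qmat_le f A B hA hB
end
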